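/- Let L be a G-graded field with graded subfields l and K, and let k be a graded subfield with k ⊆ l ∩ K. If the extension L/K is finite of degree n (L is free of rank n as a K-module), then every fiber of the restriction map ψ_{L/l,K/k} : P_{L/l} → P_{K/k}, O ↦ O ∩ K, has at most n elements; if L = K then ψ_{L/l,K/k} is injective. -/

import Mathlib

universe u v

/-- A `G`-graded commutative ring structure on `A`: graded pieces `deg g`,
multiplicativity of the grading, and an internal direct sum decomposition
recorded by the homogeneous-component function `comp`. -/
structure GradedStr (G : Type u) [CommGroup G] (A : Type v) [CommRing A] where
  deg : G → AddSubgroup A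
  one_mem : (1 : A) ∈ deg 1
  mul_mem : ∀ {g h : G} {a b : A}, a ∈ deg g → b ∈ deg h → a * b ∈ deg (g * h)
  comp : A → G → A
  comp_mem : ∀ a g, comp a g ∈ deg g
  comp_add : ∀ a b g, comp (a + b) g = comp a g + comp b g
  comp_of_mem : ∀ {a : A} {g : G}, a ∈ deg g → comp a g = a
  comp_of_mem_ne : ∀ {a : A} {g g' : G}, a ∈ deg g → g' ≠ g → comp a g' = 0
  finite_support : ∀ a : A, (Function.support (comp a)).Finite
  sum_comp : ∀ a : A, ∑ᶠ g, comp a g = a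

namespace GradedStr

variable {G : Type u} [CommGroup G] {A : Type v} [CommRing A]

/-- `a` is homogeneous: it lies in some graded piece. -/
def IsHomog (𝒜 : GradedStr G A) (a : A) : Prop := ∃ g, a ∈ 𝒜.deg g

/-- A `G`-graded field: a nonzero graded ring in which every nonzero homogeneous
element is invertible. -/
def IsGradedField (𝒜 : GradedStr G A) : Prop :=
  Nontrivial A ∧ ∀ a : A, 𝒜.IsHomog a → a ≠ 0 → IsUnit a

/-- A graded subring: a subring stable under taking homogeneous components. -/
def IsGradedSubring (𝒜 : GradedStr G A) (S : Subring A) : Prop :=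
  ∀ x ∈ S, ∀ g, 𝒜.comp x g ∈ S

/-- A graded subfield of a graded field: a graded subring containing the inverses of
its nonzero homogeneous elements. -/
def IsGradedSubfield (𝒜 : GradedStr G A) (S : Subring A) : Prop :=
  𝒜.IsGradedSubring S ∧ ∀ x ∈ S, 𝒜.IsHomog x → x ≠ 0 → Ring.inverse x ∈ S

/-- The additive subgroup of homogeneous polynomials of grading `h` in `K[g₀⁻¹ T]`,
the polynomial ring in which `T` is declared homogeneous of grading `g₀`: the
coefficient of `T^n` must be homogeneous of grading `h * g₀⁻ⁿ`. -/
def polyDeg (𝒜 : GradedStr G A) (g₀ h : G) : AddSubgroup (Polynomial A) where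
  carrier := {p | ∀ n : ℕ, p.coeff n ∈ 𝒜.deg (h * (g₀ ^ n)⁻¹)}
  zero_mem' := by intro n; simpa using (𝒜.deg (h * (g₀ ^ n)⁻¹)).zero_mem
  add_mem' := by
    intro p q hp hq n
    rw [Polynomial.coeff_add]
    exact (𝒜.deg _).add_mem (hp n) (hq n)
  neg_mem' := by
    intro p hp n
    rw [Polynomial.coeff_neg]
    exact (𝒜.deg _).neg_mem (hp n)

/-- A homogeneous polynomial in `K[g₀⁻¹T]`. -/
def IsHomogPoly (𝒜 : GradedStr G A) (g₀ : G) (p : Polynomial A) : Prop :=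
  ∃ h, p ∈ 𝒜.polyDeg g₀ h

/-- The graded fraction field of a graded subring of a graded field, computed inside
the ambient graded field: the subring generated by `S` together with the inverses of
the nonzero homogeneous elements of `S`. -/
def fracIn (𝒜 : GradedStr G A) (S : Subring A) : Subring A :=
  Subring.closure (↑S ∪ {y : A | ∃ x ∈ S, x ≠ 0 ∧ 𝒜.IsHomog x ∧ y = Ring.inverse x})

end GradedStr

/-- `x` is integral over the subring `S` (satisfies a monic polynomial equation with
coefficients in `S`). -/
def IntegralOver {A : Type v} [CommRing A] (S : Subring A) (x : A) : Prop :=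
  ∃ p : Polynomial A, p.Monic ∧ (∀ n, p.coeff n ∈ S) ∧ Polynomial.eval x p = 0

/-- Algebraic independence of a family of elements over a subring: the evaluation map
from the (multivariate) polynomial ring is injective.  (For homogeneous elements this
is graded algebraic independence, the grading playing no role in injectivity.) -/
def AlgIndepOver {A : Type v} [CommRing A] {ι : Type*} (S : Subring A) (T : ι → A) : Prop :=
  Function.Injective (MvPolynomial.eval₂Hom S.subtype T)

/-- A graded valuation ring of the graded subfield `F` of the ambient graded field:
a graded subring `O ⊆ F` such that every nonzero homogeneous element `f` of `F`
satisfies `f ∈ O` or `f⁻¹ ∈ O`. -/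
def IsGVRofSubfield {G : Type u} [CommGroup G] {A : Type v} [CommRing A]
    (𝒜 : GradedStr G A) (F : Subring A) (O : Subring A) : Prop :=
  O ≤ F ∧ 𝒜.IsGradedSubring O ∧
    ∀ f ∈ F, f ≠ 0 → 𝒜.IsHomog f → f ∈ O ∨ Ring.inverse f ∈ O


namespace GradedStr

variable {G : Type u} [CommGroup G] {A : Type v} [CommRing A]

/-- The component map as an additive homomorphism. -/
def compHom (𝒜 : GradedStr G A) (g : G) : A →+ A :=
  AddMonoidHom.mk' (fun a => 𝒜.comp a g) (fun a b => 𝒜.comp_add a b g)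

theorem comp_mul_left (𝒜 : GradedStr G A) {a : A} {g : G} (ha : a ∈ 𝒜.deg g) (b : A) (h : G) :
    𝒜.comp (a * b) (g * h) = a * 𝒜.comp b h := by
  classical
  have hfin := 𝒜.finite_support b
  have hb : b = ∑ i ∈ hfin.toFinset, 𝒜.comp b i := by
    conv_lhs => rw [← 𝒜.sum_comp b]
    exact finsum_eq_sum _ hfin
  have h1 : 𝒜.comp (a * b) (g * h) = ∑ i ∈ hfin.toFinset, 𝒜.comp (a * 𝒜.comp b i) (g * h) := by
    conv_lhs => rw [hb, Finset.mul_sum]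
    exact map_sum (𝒜.compHom (g * h)) _ _
  rw [h1, Finset.sum_eq_single h]
  · exact 𝒜.comp_of_mem (𝒜.mul_mem ha (𝒜.comp_mem b h))
  · intro i _ hi
    apply 𝒜.comp_of_mem_ne (𝒜.mul_mem ha (𝒜.comp_mem b i))
    intro h'
    exact hi (mul_left_cancel h').symm
  · intro hh
    have h0 : 𝒜.comp b h = 0 := by simpa using hh
    rw [h0, mul_zero]
    exact 𝒜.comp_of_mem (AddSubgroup.zero_mem _)

theorem mem_of_comp_mem (𝒜 : GradedStr G A) (S : Subring A) {x : A}
    (h : ∀ g, 𝒜.comp x g ∈ S) : x ∈ S := by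
  rw [← 𝒜.sum_comp x, finsum_eq_sum _ (𝒜.finite_support x)]
  exact S.sum_mem fun i _ => h i

theorem exists_inv (𝒜 : GradedStr G A) (h𝒜 : 𝒜.IsGradedField) {f : A} {g : G}
    (hf : f ∈ 𝒜.deg g) (h0 : f ≠ 0) :
    ∃ y, f * y = 1 ∧ y ∈ 𝒜.deg g⁻¹ ∧ y = Ring.inverse f := by
  have hu := h𝒜.2 f ⟨g, hf⟩ h0
  have hm : f * Ring.inverse f = 1 := Ring.mul_inverse_cancel f hu
  refine ⟨Ring.inverse f, hm, ?_, rfl⟩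
  have h1 := 𝒜.comp_mul_left hf (Ring.inverse f) g⁻¹
  rw [hm, mul_inv_cancel, 𝒜.comp_of_mem 𝒜.one_mem] at h1
  have : Ring.inverse f = 𝒜.comp (Ring.inverse f) g⁻¹ := by
    apply hu.mul_left_cancel
    rw [hm, h1]
  rw [this]
  exact 𝒜.comp_mem _ _

theorem pow_mem (𝒜 : GradedStr G A) {a : A} {g : G} (ha : a ∈ 𝒜.deg g) (m : ℕ) :
    a ^ m ∈ 𝒜.deg (g ^ m) := by
  induction m with
  | zero => simpa using 𝒜.one_mem
  | succ m ih => rw [pow_succ, pow_succ]; exact 𝒜.mul_mem ih ha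

end GradedStr

/-- Nonunits of the subring `O`. -/
def InNonunits {A : Type v} [CommRing A] (O : Subring A) (f : A) : Prop :=
  f ∈ O ∧ ∀ y ∈ O, f * y ≠ 1

section
variable {G : Type u} [CommGroup G] {A : Type v} [CommRing A]

theorem InNonunits.mul {O : Subring A} {f a : A} (hf : InNonunits O f) (ha : a ∈ O) :
    InNonunits O (f * a) :=
  ⟨O.mul_mem hf.1 ha, fun y hy h => hf.2 (a * y) (O.mul_mem ha hy) (by rw [← mul_assoc, h])⟩

theorem InNonunits.neg {O : Subring A} {f : A} (hf : InNonunits O f) :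
    InNonunits O (-f) := by
  have := hf.mul (O.neg_mem O.one_mem)
  simpa using this

theorem InNonunits.zero [Nontrivial A] (O : Subring A) : InNonunits O (0 : A) :=
  ⟨O.zero_mem, fun y _ h => by simp at h⟩

theorem not_InNonunits_one (O : Subring A) : ¬ InNonunits O (1 : A) :=
  fun h => h.2 1 O.one_mem (by simp)

/-- totality of divisibility -/
theorem gvr_total (𝒜 : GradedStr G A) (h𝒜 : 𝒜.IsGradedField) {K O : Subring A}
    (hK : 𝒜.IsGradedSubfield K) (hO : IsGVRofSubfield 𝒜 K O) {a b : A}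
    (ha : a ∈ K) (hb : b ∈ K) {g h : G} (hag : a ∈ 𝒜.deg g) (hbh : b ∈ 𝒜.deg h) :
    (∃ o ∈ O, a = o * b) ∨ (∃ o ∈ O, b = o * a) := by
  by_cases ha0 : a = 0
  · exact Or.inl ⟨0, O.zero_mem, by simp [ha0]⟩
  by_cases hb0 : b = 0
  · exact Or.inr ⟨0, O.zero_mem, by simp [hb0]⟩
  obtain ⟨a', haa, ha', haK⟩ := 𝒜.exists_inv h𝒜 hag ha0
  obtain ⟨b', hbb, hb', hbK⟩ := 𝒜.exists_inv h𝒜 hbh hb0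
  have hbK' : b' ∈ K := hbK ▸ hK.2 b hb ⟨h, hbh⟩ hb0
  have hnt := h𝒜.1
  have hmul : (a * b') * (a' * b) = 1 := by
    calc _ = (a * a') * (b * b') := by ring
      _ = 1 := by rw [haa, hbb, one_mul]
  have hne : a * b' ≠ 0 := by
    intro h0
    rw [h0, zero_mul] at hmul
    exact zero_ne_one hmul
  have hhom : a * b' ∈ 𝒜.deg (g * h⁻¹) := 𝒜.mul_mem hag hb'
  rcases hO.2.2 (a * b') (K.mul_mem ha hbK') hne ⟨_, hhom⟩ with h1 | h1
  · left
    exact ⟨_, h1, by rw [mul_assoc, mul_comm b' b, hbb, mul_one]⟩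
  · right
    have : Ring.inverse (a * b') = a' * b :=
      (h𝒜.2 _ ⟨_, hhom⟩ hne).mul_left_cancel
        (by rw [hmul, Ring.mul_inverse_cancel _ (h𝒜.2 _ ⟨_, hhom⟩ hne)])
    rw [this] at h1
    exact ⟨_, h1, by rw [mul_right_comm, mul_comm a' a, haa, one_mul]⟩

theorem top_gsf (𝒜 : GradedStr G A) : 𝒜.IsGradedSubfield (⊤ : Subring A) :=
  ⟨fun _ _ _ => Subring.mem_top _, fun _ _ _ _ => Subring.mem_top _⟩

theorem InNonunits.add (𝒜 : GradedStr G A) (h𝒜 : 𝒜.IsGradedField) {O : Subring A}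
    (hO : IsGVRofSubfield 𝒜 ⊤ O) {a b : A} {g : G}
    (hag : a ∈ 𝒜.deg g) (hbg : b ∈ 𝒜.deg g) (ha : InNonunits O a) (hb : InNonunits O b) :
    InNonunits O (a + b) := by
  rcases gvr_total 𝒜 h𝒜 (top_gsf 𝒜) hO (Subring.mem_top a) (Subring.mem_top b) hag hbg with
    ⟨o, ho, h⟩ | ⟨o, ho, h⟩
  · have : a + b = b * (o + 1) := by rw [h]; ring
    rw [this]
    exact hb.mul (O.add_mem ho O.one_mem)
  · have : a + b = a * (o + 1) := by rw [h]; ring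
    rw [this]
    exact ha.mul (O.add_mem ho O.one_mem)

theorem InNonunits.sum (𝒜 : GradedStr G A) (h𝒜 : 𝒜.IsGradedField) {O : Subring A}
    (hO : IsGVRofSubfield 𝒜 ⊤ O) {ι : Type*} (s : Finset ι) (f : ι → A) (g : G)
    (hg : ∀ i ∈ s, f i ∈ 𝒜.deg g) (hf : ∀ i ∈ s, InNonunits O (f i)) :
    InNonunits O (∑ i ∈ s, f i) := by
  classical
  have := h𝒜.1
  induction s using Finset.induction_on with
  | empty => simpa using InNonunits.zero O
  | insert a s ha ih =>
    rw [Finset.sum_insert ha]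
    refine InNonunits.add 𝒜 h𝒜 hO (hg a (by simp)) ?_ (hf a (by simp)) (ih ?_ ?_)
    · exact AddSubgroup.sum_mem _ fun i hi => hg i (by simp [hi])
    · exact fun i hi => hg i (by simp [hi])
    · exact fun i hi => hf i (by simp [hi])

/-- Nonunits on `K` are nonunits upstairs. -/
theorem InNonunits.lift (𝒜 : GradedStr G A) (h𝒜 : 𝒜.IsGradedField) {K O : Subring A}
    (hK : 𝒜.IsGradedSubfield K) {a : A} {g : G} (hag : a ∈ 𝒜.deg g)
    (ha : InNonunits (O ⊓ K) a) : InNonunits O a := by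
  refine ⟨ha.1.1, fun y hy hay => ?_⟩
  have := h𝒜.1
  have h0 : a ≠ 0 := by
    rintro rfl
    simp at hay
  obtain ⟨a', haa, ha', haK⟩ := 𝒜.exists_inv h𝒜 hag h0
  have : y = a' := (h𝒜.2 a ⟨g, hag⟩ h0).mul_left_cancel (by rw [hay, haa])
  refine ha.2 y ⟨hy, ?_⟩ hay
  rw [this, haK]
  exact hK.2 a ha.1.2 ⟨g, hag⟩ h0

/-- Max element of a finite family for divisibility. -/
theorem exists_max_div (𝒜 : GradedStr G A) (h𝒜 : 𝒜.IsGradedField) {K O : Subring A}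
    (hK : 𝒜.IsGradedSubfield K) (hO : IsGVRofSubfield 𝒜 K O) {ι : Type*}
    (s : Finset ι) (hs : s.Nonempty) (a : ι → A) (haK : ∀ i, a i ∈ K)
    (hah : ∀ i, 𝒜.IsHomog (a i)) :
    ∃ m ∈ s, ∀ i ∈ s, ∃ o ∈ O, a i = o * a m := by
  classical
  induction hs using Finset.Nonempty.cons_induction with
  | singleton j => exact ⟨j, by simp, by simpa using ⟨1, O.one_mem, by simp⟩⟩
  | cons j s hj hs ih =>
    obtain ⟨m, hm, h⟩ := ih
    obtain ⟨g, hg⟩ := hah m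
    obtain ⟨g', hg'⟩ := hah j
    rcases gvr_total 𝒜 h𝒜 hK hO (haK m) (haK j) hg hg' with ⟨o, ho, h1⟩ | ⟨o, ho, h1⟩
    · refine ⟨j, by simp, fun i hi => ?_⟩
      rcases Finset.mem_cons.1 hi with rfl | hi
      · exact ⟨1, O.one_mem, by simp⟩
      · obtain ⟨o', ho', h2⟩ := h i hi
        exact ⟨o' * o, O.mul_mem ho' ho, by rw [h2, h1, mul_assoc]⟩
    · refine ⟨m, by simp [hm], fun i hi => ?_⟩
      rcases Finset.mem_cons.1 hi with rfl | hi
      · exact ⟨o, ho, h1⟩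
      · exact h i hi

/-- Normalized homogeneous relations. -/
theorem exists_relation (𝒜 : GradedStr G A) (h𝒜 : 𝒜.IsGradedField) {K O : Subring A}
    (hK : 𝒜.IsGradedSubfield K) (hO : IsGVRofSubfield 𝒜 K O) {N : ℕ}
    (x : Fin N → A) (d : Fin N → G) (hx : ∀ i, x i ∈ 𝒜.deg (d i))
    (c : Fin N → A) (hcK : ∀ i, c i ∈ K) (hc : ∑ i, c i * x i = 0) (hc0 : ∃ i, c i ≠ 0) :
    ∃ (s : Fin N) (a : Fin N → A), a s = 1 ∧ (∀ i, a i ∈ O) ∧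
      (∀ i, a i ∈ 𝒜.deg (d s * (d i)⁻¹)) ∧ (∀ i, s < i → InNonunits O (a i)) ∧
      ∑ i, a i * x i = 0 := by
  classical
  have hnt := h𝒜.1
  obtain ⟨i0, hi0⟩ := hc0
  obtain ⟨h0, hh0⟩ : ∃ h, 𝒜.comp (c i0) h ≠ 0 := by
    by_contra! hcon
    apply hi0
    rw [← 𝒜.sum_comp (c i0)]
    simp [hcon]
  set D : G := h0 * d i0 with hD
  let b : Fin N → A := fun i => 𝒜.comp (c i) (D * (d i)⁻¹)
  have hbK : ∀ i, b i ∈ K := fun i => hK.1 _ (hcK i) _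
  have hbd : ∀ i, b i ∈ 𝒜.deg (D * (d i)⁻¹) := fun i => 𝒜.comp_mem _ _
  have hb0 : b i0 ≠ 0 := by simpa [b, hD] using hh0
  have hbsum : ∑ i, b i * x i = 0 := by
    have h1 : 𝒜.compHom D (∑ i, c i * x i) = 0 := by rw [hc, map_zero]
    rw [map_sum] at h1
    rw [← h1]
    refine Finset.sum_congr rfl fun i _ => ?_
    have := 𝒜.comp_mul_left (hx i) (c i) (D * (d i)⁻¹)
    rw [mul_comm (x i) (c i), mul_comm (x i), mul_comm D, mul_inv_cancel_left] at this
    simp only [b, mul_comm D]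
    exact this.symm
  obtain ⟨m, -, hm⟩ := exists_max_div 𝒜 h𝒜 hK hO Finset.univ ⟨i0, by simp⟩ b hbK
    (fun i => ⟨_, hbd i⟩)
  let S : Finset (Fin N) := Finset.univ.filter fun i => ∃ o ∈ O, b m = o * b i
  have hS : S.Nonempty := ⟨m, by simpa [S] using ⟨1, O.one_mem, by simp⟩⟩
  obtain ⟨s, hsS, hsmax⟩ : ∃ s ∈ S, ∀ i ∈ S, i ≤ s :=
    ⟨S.max' hS, S.max'_mem hS, fun i hi => S.le_max' i hi⟩
  obtain ⟨o, ho, hos⟩ : ∃ o ∈ O, b m = o * b s := by simpa [S] using hsS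
  have hdiv : ∀ i, ∃ o ∈ O, b i = o * b s := by
    intro i
    obtain ⟨o', ho', h'⟩ := hm i (by simp)
    exact ⟨o' * o, O.mul_mem ho' ho, by rw [h', hos, mul_assoc]⟩
  have hs0 : b s ≠ 0 := by
    intro h
    obtain ⟨o', -, h'⟩ := hdiv i0
    exact hb0 (by rw [h', h, mul_zero])
  obtain ⟨t, hst, htd, -⟩ := 𝒜.exists_inv h𝒜 (hbd s) hs0
  have hdiv' : ∀ i, b i * t ∈ O := by
    intro i
    obtain ⟨o', ho', h'⟩ := hdiv i
    rw [h', mul_assoc, hst, mul_one]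
    exact ho'
  refine ⟨s, fun i => b i * t, hst, hdiv', fun i => ?_, fun i hi => ⟨hdiv' i, fun y hy h => ?_⟩, ?_⟩
  · have := 𝒜.mul_mem (hbd i) htd
    have e : D * (d i)⁻¹ * (D * (d s)⁻¹)⁻¹ = d s * (d i)⁻¹ := by
      rw [mul_inv, inv_inv, mul_mul_mul_comm, mul_inv_cancel, one_mul, mul_comm]
    rwa [e] at this
  · apply absurd (hsmax i _) (not_le.2 hi)
    have : b m = (o * y) * b i := by
      calc b m = o * b s := hos
        _ = o * b s * (b i * t * y) := by rw [h, mul_one]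
        _ = o * (b s * t) * y * b i := by ring
        _ = _ := by rw [hst, mul_one]
    simpa [S] using ⟨_, O.mul_mem ho hy, this⟩
  · have : ∑ i, b i * t * x i = t * ∑ i, b i * x i := by
      rw [Finset.mul_sum]
      exact Finset.sum_congr rfl fun i _ => by ring
    rw [this, hbsum, mul_zero]

theorem exists_dep [Nontrivial A] (K : Subring A) (n : ℕ) (e : Fin n → A)
    (he : ∀ y : A, ∃! c : Fin n → A, (∀ i, c i ∈ K) ∧ y = ∑ i, c i * e i)
    (x : Fin (n + 1) → A) :
    ∃ c : Fin (n + 1) → A, (∀ i, c i ∈ K) ∧ ∑ i, c i * x i = 0 ∧ ∃ i, c i ≠ 0 := by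
  classical
  have hspan : ⊤ ≤ Submodule.span K (Set.range e) := by
    intro y _
    obtain ⟨c, ⟨hc, hy⟩, -⟩ := he y
    rw [hy]
    refine Submodule.sum_mem _ fun i _ => ?_
    exact Submodule.smul_mem _ (⟨c i, hc i⟩ : K) (Submodule.subset_span ⟨i, rfl⟩)
  have hnot : ¬ LinearIndependent K x := by
    intro hli
    have := linearIndependent_le_span_finset x hli (Finset.univ.image e) (by simpa using hspan)
    have h2 : (Finset.univ.image e).card ≤ n := by
      simpa using Finset.card_image_le (s := Finset.univ) (f := e)
    simp at this
    have h3 : n + 1 ≤ (Finset.univ.image e).card := by exact_mod_cast this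
    omega
  rw [Fintype.not_linearIndependent_iff] at hnot
  obtain ⟨c, hc, i, hi⟩ := hnot
  refine ⟨fun i => (c i : A), fun i => (c i).2, by simpa [Subring.smul_def] using hc, i, ?_⟩
  simpa using hi

/-- The structure of the relation satisfied by a homogeneous unit. -/
theorem exists_terms (𝒜 : GradedStr G A) (h𝒜 : 𝒜.IsGradedField) {K O' : Subring A}
    (hK : 𝒜.IsGradedSubfield K) (hO' : IsGVRofSubfield 𝒜 K O') (n : ℕ) (e : Fin n → A)
    (he : ∀ y : A, ∃! c : Fin n → A, (∀ i, c i ∈ K) ∧ y = ∑ i, c i * e i)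
    {x y : A} {g : G} (hx : x ∈ 𝒜.deg g) (hy : y ∈ 𝒜.deg g⁻¹) (hxy : x * y = 1) :
    ∃ (s : Fin (n + 1)) (a : Fin (n + 1) → A), (∀ i, a i ∈ O') ∧ (∀ i, 𝒜.IsHomog (a i)) ∧
      (∀ i, s < i → InNonunits O' (a i)) ∧
      (∑ i ∈ Finset.univ.filter (fun i => s < i), a i * x ^ (i.1 - s.1)) +
      (1 + ∑ i ∈ Finset.univ.filter (fun i => i < s), a i * y ^ (s.1 - i.1)) = 0 ∧
      (∀ i, s < i → a i * x ^ (i.1 - s.1) ∈ 𝒜.deg 1) ∧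
      (∀ i, i < s → a i * y ^ (s.1 - i.1) ∈ 𝒜.deg 1) := by
  classical
  have hnt := h𝒜.1
  obtain ⟨c, hcK, hc, hc0⟩ := exists_dep K n e he (fun i => x ^ i.1)
  obtain ⟨s, a, has, haO, had, haM, hsum⟩ := exists_relation 𝒜 h𝒜 hK hO' (fun i => x ^ i.1)
    (fun i => g ^ i.1) (fun i => 𝒜.pow_mem hx i.1) c hcK hc hc0
  have e1 : ∀ i, s < i → x ^ i.1 * y ^ s.1 = x ^ (i.1 - s.1) := by
    intro i hi
    have hi' : s.1 ≤ i.1 := le_of_lt hi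
    conv_lhs => rw [← Nat.sub_add_cancel hi', pow_add, mul_assoc, ← mul_pow, hxy, one_pow, mul_one]
  have e2 : ∀ i, i < s → x ^ i.1 * y ^ s.1 = y ^ (s.1 - i.1) := by
    intro i hi
    have hi' : i.1 ≤ s.1 := le_of_lt hi
    conv_lhs => rw [← Nat.sub_add_cancel hi', pow_add, mul_comm, mul_assoc, ← mul_pow,
      mul_comm y x, hxy, one_pow, mul_one]
  have hd : ∀ i, a i * (x ^ i.1 * y ^ s.1) ∈ 𝒜.deg 1 := by
    intro i
    have := 𝒜.mul_mem (had i) (𝒜.mul_mem (𝒜.pow_mem hx i.1) (𝒜.pow_mem hy s.1))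
    have e : g ^ s.1 * (g ^ i.1)⁻¹ * (g ^ i.1 * g⁻¹ ^ s.1) = 1 := by
      rw [inv_pow]; group
    rwa [e] at this
  refine ⟨s, a, haO, fun i => ⟨_, had i⟩, haM, ?_, fun i hi => e1 i hi ▸ hd i,
    fun i hi => e2 i hi ▸ hd i⟩
  have h0 : ∑ i, a i * (x ^ i.1 * y ^ s.1) = 0 := by
    have := congrArg (· * y ^ s.1) hsum
    simp only [zero_mul, Finset.sum_mul, mul_assoc] at this
    exact this
  rw [← Finset.sum_filter_add_sum_filter_not Finset.univ (fun i => s < i)] at h0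
  have h3 : (Finset.univ.filter fun i => ¬ s < i) =
      insert s (Finset.univ.filter fun i => i < s) := by
    ext i
    simp [le_iff_eq_or_lt]
  rw [h3, Finset.sum_insert (by simp), has, one_mul, ← mul_pow, hxy, one_pow] at h0
  rw [← h0]
  congr 1
  · refine Finset.sum_congr rfl fun i hi => ?_
    rw [e1 i (by simpa using hi)]
  · congr 1
    refine Finset.sum_congr rfl fun i hi => ?_
    rw [e2 i (by simpa using hi)]

theorem gvr_mem_or (𝒜 : GradedStr G A) (h𝒜 : 𝒜.IsGradedField) {O : Subring A}
    (hO : IsGVRofSubfield 𝒜 ⊤ O) {x y : A} {g : G} (hx : x ∈ 𝒜.deg g) (hxy : x * y = 1) :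
    x ∈ O ∨ y ∈ O := by
  have := h𝒜.1
  have h0 : x ≠ 0 := by
    rintro rfl
    simp at hxy
  obtain ⟨a', haa, ha', haK⟩ := 𝒜.exists_inv h𝒜 hx h0
  have : y = a' := (h𝒜.2 x ⟨g, hx⟩ h0).mul_left_cancel (by rw [hxy, haa])
  rw [this, haK]
  exact hO.2.2 x (Subring.mem_top _) h0 ⟨g, hx⟩

/-- Incomparability. -/
theorem incomparable (𝒜 : GradedStr G A) (h𝒜 : 𝒜.IsGradedField) {K O' : Subring A}
    (hK : 𝒜.IsGradedSubfield K) (hO' : IsGVRofSubfield 𝒜 K O') (n : ℕ) (e : Fin n → A)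
    (he : ∀ y : A, ∃! c : Fin n → A, (∀ i, c i ∈ K) ∧ y = ∑ i, c i * e i)
    {O₁ O₂ : Subring A} (h₁ : IsGVRofSubfield 𝒜 ⊤ O₁) (h₂ : IsGVRofSubfield 𝒜 ⊤ O₂)
    (e₁ : O₁ ⊓ K = O') (e₂ : O₂ ⊓ K = O') (hle : O₁ ≤ O₂) : O₁ = O₂ := by
  classical
  have hnt := h𝒜.1
  refine le_antisymm hle fun z hz => 𝒜.mem_of_comp_mem O₁ fun g => ?_
  have hx2 := h₂.2.1 z hz g
  have hx := 𝒜.comp_mem z g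
  generalize 𝒜.comp z g = x at hx hx2
  by_contra hx1
  have h0 : x ≠ 0 := by
    rintro rfl
    exact hx1 O₁.zero_mem
  obtain ⟨y, hxy, hy, -⟩ := 𝒜.exists_inv h𝒜 hx h0
  have hy1 : y ∈ O₁ := (gvr_mem_or 𝒜 h𝒜 h₁ hx hxy).resolve_left hx1
  have hyM : InNonunits O₁ y := by
    refine ⟨hy1, fun t ht h => hx1 ?_⟩
    have : x = t := by
      calc x = x * (y * t) := by rw [h, mul_one]
        _ = (x * y) * t := by ring
        _ = t := by rw [hxy, one_mul]
    rwa [this]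
  obtain ⟨s, a, haO, hah, haM, hsum, hd1, hd2⟩ := exists_terms 𝒜 h𝒜 hK hO' n e he hx hy hxy
  have hM : ∀ f, f ∈ 𝒜.deg 1 → InNonunits O₂ f → InNonunits O₁ f := by
    intro f hf hfM
    by_cases hf0 : f = 0
    · rw [hf0]; exact InNonunits.zero _
    obtain ⟨f', hff, hf', -⟩ := 𝒜.exists_inv h𝒜 hf hf0
    refine ⟨?_, fun t ht => hfM.2 t (hle ht)⟩
    exact (gvr_mem_or 𝒜 h𝒜 h₁ hf hff).resolve_right fun h => hfM.2 f' (hle h) hff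
  have hA : InNonunits O₁ (∑ i ∈ Finset.univ.filter (fun i => s < i), a i * x ^ (i.1 - s.1)) := by
    refine InNonunits.sum 𝒜 h𝒜 h₁ _ _ 1 (fun i hi => hd1 i (by simpa using hi)) fun i hi => ?_
    have hi' : s < i := by simpa using hi
    refine hM _ (hd1 i hi') ?_
    obtain ⟨g', hg'⟩ := hah i
    have := haM i hi'
    rw [← e₂] at this
    exact (InNonunits.lift 𝒜 h𝒜 hK hg' this).mul (O₂.pow_mem hx2 _)
  have hB : InNonunits O₁ (∑ i ∈ Finset.univ.filter (fun i => i < s), a i * y ^ (s.1 - i.1)) := by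
    refine InNonunits.sum 𝒜 h𝒜 h₁ _ _ 1 (fun i hi => hd2 i (by simpa using hi)) fun i hi => ?_
    have hi' : i.1 < s.1 := by simpa using hi
    have h4 : a i * y ^ (s.1 - i.1) = y * (a i * y ^ (s.1 - i.1 - 1)) := by
      obtain ⟨k, hk⟩ : ∃ k, s.1 - i.1 = k + 1 := ⟨s.1 - i.1 - 1, by omega⟩
      rw [hk, pow_succ, Nat.add_sub_cancel]
      ring
    rw [h4]
    have hai : a i ∈ O₁ := by
      have := haO i
      rw [← e₁] at this
      exact this.1
    exact hyM.mul (O₁.mul_mem hai (O₁.pow_mem hy1 _))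
  have hAB := (InNonunits.add 𝒜 h𝒜 h₁ (g := 1)
    (AddSubgroup.sum_mem _ fun i hi => hd1 i (by simpa using hi))
    (AddSubgroup.sum_mem _ fun i hi => hd2 i (by simpa using hi)) hA hB).neg
  refine not_InNonunits_one O₁ ?_
  convert hAB using 1
  linear_combination hsum

/-- Separating elements. -/
theorem exists_sep (𝒜 : GradedStr G A) (h𝒜 : 𝒜.IsGradedField) {K O' : Subring A}
    (hK : 𝒜.IsGradedSubfield K) (hO' : IsGVRofSubfield 𝒜 K O') (n : ℕ) (e : Fin n → A)
    (he : ∀ y : A, ∃! c : Fin n → A, (∀ i, c i ∈ K) ∧ y = ∑ i, c i * e i)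
    {O₁ O₂ : Subring A} (h₁ : IsGVRofSubfield 𝒜 ⊤ O₁) (h₂ : IsGVRofSubfield 𝒜 ⊤ O₂)
    (e₁ : O₁ ⊓ K = O') (e₂ : O₂ ⊓ K = O') (hne : O₁ ≠ O₂) :
    ∃ u ∈ 𝒜.deg 1, (∀ O : Subring A, IsGVRofSubfield 𝒜 ⊤ O → O ⊓ K = O' → u ∈ O) ∧
      ¬ InNonunits O₁ u ∧ InNonunits O₂ u := by
  classical
  have hnt := h𝒜.1
  obtain ⟨g, x, hx, hx1, hx2⟩ : ∃ g, ∃ x ∈ 𝒜.deg g, x ∈ O₁ ∧ x ∉ O₂ := by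
    by_contra! hcon
    apply hne
    refine incomparable 𝒜 h𝒜 hK hO' n e he h₁ h₂ e₁ e₂ fun z hz => ?_
    exact 𝒜.mem_of_comp_mem O₂ fun g => hcon g _ (𝒜.comp_mem z g) (h₁.2.1 z hz g)
  have h0 : x ≠ 0 := by
    rintro rfl
    exact hx2 O₂.zero_mem
  obtain ⟨y, hxy, hy, -⟩ := 𝒜.exists_inv h𝒜 hx h0
  obtain ⟨s, a, haO, hah, haM, hsum, hd1, hd2⟩ := exists_terms 𝒜 h𝒜 hK hO' n e he hx hy hxy
  set P := ∑ i ∈ Finset.univ.filter (fun i => s < i), a i * x ^ (i.1 - s.1) with hP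
  set Q := ∑ i ∈ Finset.univ.filter (fun i => i < s), a i * y ^ (s.1 - i.1) with hQ
  have hPd : P ∈ 𝒜.deg 1 := AddSubgroup.sum_mem _ fun i hi => hd1 i (by simpa using hi)
  have key : ∀ O : Subring A, IsGVRofSubfield 𝒜 ⊤ O → O ⊓ K = O' →
      P + 1 ∈ O ∧ (P + 1) * x ∈ O := by
    intro O hO hOK
    have ha : ∀ i, a i ∈ O := by
      intro i
      have := haO i
      rw [← hOK] at this
      exact this.1
    rcases gvr_mem_or 𝒜 h𝒜 hO hx hxy with h | h
    · have : P + 1 ∈ O := O.add_mem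
        (O.sum_mem fun i _ => O.mul_mem (ha i) (O.pow_mem h _)) O.one_mem
      exact ⟨this, O.mul_mem this h⟩
    · have hQO : Q ∈ O := O.sum_mem fun i _ => O.mul_mem (ha i) (O.pow_mem h _)
      have hQx : Q * x ∈ O := by
        rw [hQ, Finset.sum_mul]
        refine O.sum_mem fun i hi => ?_
        have hi' : i.1 < s.1 := by simpa using hi
        have h4 : a i * y ^ (s.1 - i.1) * x = a i * y ^ (s.1 - i.1 - 1) := by
          obtain ⟨k, hk⟩ : ∃ k, s.1 - i.1 = k + 1 := ⟨s.1 - i.1 - 1, by omega⟩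
          rw [hk, pow_succ, Nat.add_sub_cancel]
          linear_combination a i * y ^ k * hxy
        rw [h4]
        exact O.mul_mem (ha i) (O.pow_mem h _)
      have hPQ : P + 1 = -Q := by linear_combination hsum
      rw [hPQ]
      refine ⟨O.neg_mem hQO, ?_⟩
      rw [neg_mul]
      exact O.neg_mem hQx
  refine ⟨P + 1, AddSubgroup.add_mem _ hPd 𝒜.one_mem, fun O hO hOK => (key O hO hOK).1, ?_, ?_⟩
  · have hA : InNonunits O₁ P := by
      refine InNonunits.sum 𝒜 h𝒜 h₁ _ _ 1 (fun i hi => hd1 i (by simpa using hi)) fun i hi => ?_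
      have hi' : s < i := by simpa using hi
      obtain ⟨g', hg'⟩ := hah i
      have := haM i hi'
      rw [← e₁] at this
      exact (InNonunits.lift 𝒜 h𝒜 hK hg' this).mul (O₁.pow_mem hx1 _)
    intro hcon
    have h5 := InNonunits.add 𝒜 h𝒜 h₁ (AddSubgroup.add_mem _ hPd 𝒜.one_mem)
      (AddSubgroup.neg_mem _ hPd) hcon hA.neg
    refine not_InNonunits_one O₁ ?_
    convert h5 using 1
    ring
  · refine ⟨(key O₂ h₂ e₂).1, fun t ht h => hx2 ?_⟩
    have : x = (P + 1) * x * t := by linear_combination -x * h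
    rw [this]
    exact O₂.mul_mem (key O₂ h₂ e₂).2 ht

theorem no_many (𝒜 : GradedStr G A) (h𝒜 : 𝒜.IsGradedField) {K O' : Subring A}
    (hK : 𝒜.IsGradedSubfield K) (hO' : IsGVRofSubfield 𝒜 K O') (n : ℕ) (e : Fin n → A)
    (he : ∀ y : A, ∃! c : Fin n → A, (∀ i, c i ∈ K) ∧ y = ∑ i, c i * e i)
    (O : Fin (n + 1) → Subring A) (hO : ∀ i, IsGVRofSubfield 𝒜 ⊤ (O i))
    (hOK : ∀ i, O i ⊓ K = O') (hinj : Function.Injective O) : False := by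
  classical
  have hnt := h𝒜.1
  have hex : ∀ i j, i ≠ j → ∃ u ∈ 𝒜.deg 1, (∀ m, u ∈ O m) ∧
      ¬ InNonunits (O i) u ∧ InNonunits (O j) u := by
    intro i j hij
    obtain ⟨u, hu, h1, h2, h3⟩ := exists_sep 𝒜 h𝒜 hK hO' n e he (hO i) (hO j) (hOK i) (hOK j)
      (fun h => hij (hinj h))
    exact ⟨u, hu, fun m => h1 _ (hO m) (hOK m), h2, h3⟩
  have hex2 : ∀ i, ∀ s : Finset (Fin (n + 1)), i ∉ s → ∃ u ∈ 𝒜.deg 1, (∀ m, u ∈ O m) ∧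
      ¬ InNonunits (O i) u ∧ ∀ j ∈ s, InNonunits (O j) u := by
    intro i s
    induction s using Finset.induction_on with
    | empty => exact fun _ => ⟨1, 𝒜.one_mem, fun m => (O m).one_mem, not_InNonunits_one _, by simp⟩
    | insert j s hj ih =>
      intro his
      simp only [Finset.mem_insert, not_or] at his
      obtain ⟨u, hu, hum, hui, hus⟩ := ih his.2
      obtain ⟨w, hw, hwm, hwi, hwj⟩ := hex i j his.1
      refine ⟨u * w, by simpa using 𝒜.mul_mem hu hw, fun m => (O m).mul_mem (hum m) (hwm m),
        ?_, ?_⟩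
      · intro h
        have hu' : ∃ y ∈ O i, u * y = 1 := by
          by_contra! hc
          exact hui ⟨hum i, hc⟩
        have hw' : ∃ y ∈ O i, w * y = 1 := by
          by_contra! hc
          exact hwi ⟨hwm i, hc⟩
        obtain ⟨p, hp, hp1⟩ := hu'
        obtain ⟨q, hq, hq1⟩ := hw'
        refine h.2 (p * q) ((O i).mul_mem hp hq) ?_
        calc u * w * (p * q) = (u * p) * (w * q) := by ring
          _ = 1 := by rw [hp1, hq1, one_mul]
      · intro m hm
        rcases Finset.mem_insert.1 hm with rfl | hm
        · rw [mul_comm]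
          exact hwj.mul (hum _)
        · exact (hus m hm).mul (hwm m)
  choose x hx1 hxm hxi hxj using fun i => hex2 i (Finset.univ.erase i) (by simp)
  obtain ⟨c, hcK, hc, hc0⟩ := exists_dep K n e he x
  obtain ⟨s, a, has, haO, had, -, hsum⟩ := exists_relation 𝒜 h𝒜 hK hO' x
    (fun _ => 1) hx1 c hcK hc hc0
  rw [← Finset.add_sum_erase _ _ (Finset.mem_univ s), has, one_mul] at hsum
  apply hxi s
  rw [eq_neg_of_add_eq_zero_left hsum]
  refine (InNonunits.sum 𝒜 h𝒜 (hO s) _ _ 1 (fun i _ => ?_) fun i hi => ?_).neg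
  · have := 𝒜.mul_mem (had i) (hx1 i)
    simpa using this
  · rw [mul_comm]
    refine (hxj i s ?_).mul ?_
    · simpa [eq_comm] using hi
    · have := haO i
      rw [← hOK s] at this
      exact this.1

end

/-- Let `L` be a `G`-graded field with graded subfields `l` and `K`,
and `k` a graded subfield with `k ⊆ l ∩ K`.  If `L/K` is finite of degree `n` (`L` is
free of rank `n` as a `K`-module) then every fiber of the restriction map
`ψ : P_{L/l} → P_{K/k}`, `O ↦ O ∩ K`, has at most `n` elements; if `L = K` then `ψ`
is injective. -/
theorem psi_finite_fibers_and_injective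
    {G : Type u} [CommGroup G] {L : Type v} [CommRing L]
    (𝒜 : GradedStr G L) (hL : 𝒜.IsGradedField)
    (l K k : Subring L)
    (hl : 𝒜.IsGradedSubfield l) (hK : 𝒜.IsGradedSubfield K)
    (hk : 𝒜.IsGradedSubfield k) (hkl : k ≤ l) (hkK : k ≤ K) :
    (∀ n : ℕ, ∀ e : Fin n → L,
      (∀ y : L, ∃! c : Fin n → L, (∀ i, c i ∈ K) ∧ y = ∑ i, c i * e i) →
      ∀ O' : Subring L, IsGVRofSubfield 𝒜 K O' → k ≤ O' →
        Cardinal.mk {O : Subring L //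
          (IsGVRofSubfield 𝒜 ⊤ O ∧ l ≤ O) ∧ O ⊓ K = O'} ≤ n) ∧
    ((∀ x : L, x ∈ K) →
      ∀ O₁ O₂ : Subring L, IsGVRofSubfield 𝒜 ⊤ O₁ → l ≤ O₁ →
        IsGVRofSubfield 𝒜 ⊤ O₂ → l ≤ O₂ → O₁ ⊓ K = O₂ ⊓ K → O₁ = O₂) := by
  refine ⟨?_, ?_⟩
  · intro n e he O' hO' _
    by_contra hcon
    rw [not_le] at hcon
    have h1 : ((n + 1 : ℕ) : Cardinal) ≤ Cardinal.mk {O : Subring L //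
          (IsGVRofSubfield 𝒜 ⊤ O ∧ l ≤ O) ∧ O ⊓ K = O'} := by
      rw [Nat.cast_add, Nat.cast_one]
      exact Cardinal.add_one_le_of_lt hcon
    have h2 : Cardinal.lift.{v} (Cardinal.mk (Fin (n + 1))) ≤
        Cardinal.lift.{0} (Cardinal.mk {O : Subring L //
          (IsGVRofSubfield 𝒜 ⊤ O ∧ l ≤ O) ∧ O ⊓ K = O'}) := by
      simpa using h1
    obtain ⟨f⟩ := Cardinal.lift_mk_le'.1 h2
    exact no_many 𝒜 hL hK hO' n e he (fun i => (f i).1) (fun i => (f i).2.1.1)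
      (fun i => (f i).2.2) (fun i j h => f.injective (Subtype.ext h))
  · intro hKtop O₁ O₂ _ _ _ _ h
    have : K = ⊤ := eq_top_iff.2 fun x _ => hKtop x
    simpa [this] using h
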